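/- Let κ be an inaccessible cardinal such that the set {λ < κ : λ is inaccessible} is bounded below κ (κ is a 'successor inaccessible'). Then (V_κ,∈) has no proper elementary end extension (N,∈) with N a transitive set. -/

import Mathlib

open FirstOrder Language

/-- Relation symbols of the language of set theory: one binary symbol for membership. -/
inductive memRelSym : ℕ → Type
  | mem : memRelSym 2

/-- The first-order language `L∈` of set theory, with a single binary relation symbol. -/
def LIn : FirstOrder.Language := ⟨fun _ => Empty, memRelSym⟩

/-- The membership symbol of `L∈`. -/
abbrev memSymb : LIn.Relations 2 := memRelSym.mem

/-- Any class of ZF-sets is an `L∈`-structure with true membership. -/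
instance memStructure (A : Set ZFSet) : LIn.Structure A where
  funMap := fun f _ => f.elim
  RelMap := fun r v => match r with | .mem => (v 0).val ∈ (v 1).val

/-- The interpretation of the membership symbol in an arbitrary `L∈`-structure. -/
def memRel {N : Type*} [LIn.Structure N] (x y : N) : Prop :=
  Structure.RelMap memSymb ![x, y]

/-- The class of sets of rank `< o`, i.e. the level `V_o` of the cumulative hierarchy. -/
def Vclass (o : Ordinal) : Set ZFSet := {x | x.rank < o}

/-- `(B,∈)` is a proper elementary end extension of `(A,∈)` (both with true membership):
`A ⊆ B`, `A ≠ B`, no element of `A` gains new members, and the inclusion is elementary. -/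
def IsProperEEESets (A B : Set ZFSet) : Prop :=
  ∃ h : A ⊆ B, A ≠ B ∧
    (∀ a ∈ A, ∀ b ∈ B, b ∈ a → b ∈ A) ∧
    ∀ (n : ℕ) (φ : LIn.Formula (Fin n)) (v : Fin n → A),
      Formula.Realize φ (Set.inclusion h ∘ v) ↔ Formula.Realize φ v

open ZFSet

def mF {n : ℕ} {α : Type} (t u : LIn.Term (α ⊕ Fin n)) : LIn.BoundedFormula α n :=
  memSymb.boundedFormula₂ t u

theorem realize_mF {A : Set ZFSet} {n : ℕ} {α : Type} (t u : LIn.Term (α ⊕ Fin n))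
    (v : α → A) (w : Fin n → A) :
    (mF t u).Realize v w ↔
      (t.realize (Sum.elim v w)).val ∈ (u.realize (Sum.elim v w)).val := by
  rw [mF, BoundedFormula.realize_rel₂]
  rfl

def HistP (A : Set ZFSet) (h : A) : Prop :=
  ∀ w : A, w.1 ∈ h.1 → ∀ x : A, x.1 ∈ w.1 ↔
    ∃ u : A, u.1 ∈ h.1 ∧ u.1 ∈ w.1 ∧ ∀ z : A, z.1 ∈ x.1 → z.1 ∈ u.1

def UpP (A : Set ZFSet) (v : A) : Prop :=
  ∀ x : A, x.1 ∈ v.1 → ∃ y : A, y.1 ∈ v.1 ∧ x.1 ∈ y.1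

def RepP (A : Set ZFSet) (v : A) : Prop :=
  ∀ x : A, x.1 ∈ v.1 → ∀ F : A,
    (∀ a : A, a.1 ∈ x.1 → ∃ b : A, b.1 ∈ v.1 ∧ b.1 ∉ x.1 ∧
      ∃ c : A, c.1 ∈ F.1 ∧ a.1 ∈ c.1 ∧ b.1 ∈ c.1) →
    ∃ y : A, y.1 ∈ v.1 ∧ ∀ a : A, a.1 ∈ x.1 → ∃ b : A, b.1 ∈ y.1 ∧ b.1 ∉ x.1 ∧
      ∃ c : A, c.1 ∈ F.1 ∧ a.1 ∈ c.1 ∧ b.1 ∈ c.1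

/-- every set is contained in, not a member of, some level -/
def phiOne : LIn.Formula (Fin 0) :=
  BoundedFormula.all <| BoundedFormula.ex <| BoundedFormula.ex (mF &2 &1 ⊓
    (BoundedFormula.all (mF &3 &1 ⟹ BoundedFormula.all ((mF &4 &3).iff
      (BoundedFormula.ex (mF &5 &1 ⊓ (mF &5 &3 ⊓ BoundedFormula.all (mF &6 &4 ⟹ mF &6 &5))))))) ⊓
    ((BoundedFormula.all (mF &3 &0 ⟹ mF &3 &2)) ⊓ ∼(mF &0 &2)))

theorem realize_phiOne (A : Set ZFSet) (v : Fin 0 → A) :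
    phiOne.Realize v ↔ ∀ e : A, ∃ h w : A, w.1 ∈ h.1 ∧ HistP A h ∧
      (∀ z : A, z.1 ∈ e.1 → z.1 ∈ w.1) ∧ e.1 ∉ w.1 := by
  simp [phiOne, Formula.Realize, realize_mF, HistP, Fin.snoc, and_assoc, -Subtype.forall, -Subtype.exists]

def par {n : ℕ} : LIn.Term (Fin 1 ⊕ Fin n) := Term.var (Sum.inl 0)

def phiTwo : LIn.Formula (Fin 1) :=
  BoundedFormula.ex <| BoundedFormula.ex (mF &1 &0 ⊓ (mF par &1 ⊓
    ((BoundedFormula.all (mF &2 &0 ⟹ BoundedFormula.all ((mF &3 &2).iff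
      (BoundedFormula.ex (mF &4 &0 ⊓ (mF &4 &2 ⊓ BoundedFormula.all (mF &5 &3 ⟹ mF &5 &4))))))) ⊓
    ((BoundedFormula.all (mF &2 &1 ⟹ BoundedFormula.ex (mF &3 &1 ⊓ mF &2 &3))) ⊓
     (BoundedFormula.all (mF &2 &1 ⟹ BoundedFormula.all (
       (BoundedFormula.all (mF &4 &2 ⟹ BoundedFormula.ex (mF &5 &1 ⊓ (∼(mF &5 &2) ⊓
          BoundedFormula.ex (mF &6 &3 ⊓ (mF &4 &6 ⊓ mF &5 &6)))))) ⟹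
       (BoundedFormula.ex (mF &4 &1 ⊓ BoundedFormula.all (mF &5 &2 ⟹ BoundedFormula.ex (mF &6 &4 ⊓ (∼(mF &6 &2) ⊓
          BoundedFormula.ex (mF &7 &3 ⊓ (mF &5 &7 ⊓ mF &6 &7))))))))))))))

theorem realize_phiTwo (A : Set ZFSet) (v : Fin 1 → A) :
    phiTwo.Realize v ↔ ∃ h w : A, w.1 ∈ h.1 ∧ (v 0).1 ∈ w.1 ∧ HistP A h ∧
      UpP A w ∧ RepP A w := by
  simp [phiTwo, Formula.Realize, realize_mF, HistP, UpP, RepP, par, Fin.snoc, -Subtype.forall, -Subtype.exists]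

universe u

theorem hist_level {A : Set ZFSet.{u}} (hA : ∀ x ∈ A, ∀ y ∈ x, y ∈ A) {h : A} (hh : HistP A h)
    (w : ZFSet.{u}) : w ∈ h.1 → ∀ x ∈ A, (x ∈ w ↔ x.rank < w.rank) := by
  induction w using ZFSet.inductionOn with
  | _ w ih =>
  intro hw x hx
  refine ⟨rank_lt_of_mem, fun hlt => ?_⟩
  have hwA : w ∈ A := hA _ h.2 _ hw
  obtain ⟨xp, hxp, hle⟩ := lt_rank_iff.1 hlt
  have hxpA := hA _ hwA _ hxp
  obtain ⟨u, huh, huw, hu⟩ := (hh ⟨w, hwA⟩ hw ⟨xp, hxpA⟩).1 hxp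
  have hsub : xp.rank ≤ u.1.rank := rank_mono fun z hz => hu ⟨z, hA _ hxpA _ hz⟩ hz
  refine (hh ⟨w, hwA⟩ hw ⟨x, hx⟩).2 ⟨u, huh, huw, fun z hz => ?_⟩
  exact (ih u.1 huw huh z.1 z.2).2 ((rank_lt_of_mem hz).trans_le (hle.trans hsub))

theorem Vclass_trans (o : Ordinal.{u}) : ∀ x ∈ Vclass o, ∀ y ∈ x, y ∈ Vclass o :=
  fun _ hx _ hy => (rank_lt_of_mem hy).trans hx

/-- `V_κ` satisfies the first sentence. -/
theorem sat_one {o : Ordinal.{u}} (ho : ∀ a < o, Order.succ a < o) :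
    ∀ e : Vclass o, ∃ h w : Vclass o, w.1 ∈ h.1 ∧ HistP (Vclass o) h ∧
      (∀ z : Vclass o, z.1 ∈ e.1 → z.1 ∈ w.1) ∧ e.1 ∉ w.1 := by
  intro e
  have he : e.1.rank < o := e.2
  let h : ZFSet.{u} := ZFSet.sep (fun x => ∃ b, x = vonNeumann b) (vonNeumann (Order.succ e.1.rank))
  have hmem : ∀ x, x ∈ h ↔ ∃ b ≤ e.1.rank, x = vonNeumann b := by
    intro x
    simp only [h, ZFSet.mem_sep, mem_vonNeumann]
    constructor
    · rintro ⟨h1, b, rfl⟩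
      exact ⟨b, by simpa using h1, rfl⟩
    · rintro ⟨b, hb, rfl⟩
      exact ⟨by simpa using hb, b, rfl⟩
  have hr : h.rank < o := by
    refine lt_of_le_of_lt ?_ (ho _ he)
    rw [← subset_vonNeumann]
    intro x hx
    exact (ZFSet.mem_sep.1 hx).1
  refine ⟨⟨h, hr⟩, ⟨vonNeumann e.1.rank, by simpa [Vclass] using he⟩, (hmem _).2 ⟨_, le_rfl, rfl⟩,
    ?_, ?_, ?_⟩
  · rintro ⟨w, hw⟩ hwh ⟨x, hx⟩
    obtain ⟨b, hb, rfl⟩ := (hmem _).1 hwh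
    simp only
    constructor
    · intro hxb
      have hxr := mem_vonNeumann.1 hxb
      refine ⟨⟨vonNeumann x.rank, by simpa [Vclass] using hx⟩, (hmem _).2 ⟨_, hxr.le.trans hb, rfl⟩,
        by simpa using hxr, fun z hz => subset_vonNeumann_self x hz⟩
    · rintro ⟨⟨v, hv⟩, hvh, hvb, hz⟩
      rw [mem_vonNeumann] at hvb ⊢
      exact (rank_mono fun z hzx => hz ⟨z, Vclass_trans _ _ hx _ hzx⟩ hzx).trans_lt hvb
  · intro z hz
    exact mem_vonNeumann.2 (rank_lt_of_mem hz)
  · simp [mem_vonNeumann]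

/-- second-order collection gives boundedness of functions -/
theorem bounded_of_rep {o α : Ordinal.{u}} (hα : α < o) (hlim : ∀ a < α, Order.succ a < α)
    (v : Vclass o) (hv : v.1 = vonNeumann α) (hrep : RepP _ v) (x : ZFSet.{u}) (hx : x.rank < α)
    (g : ZFSet.{u} → Ordinal.{u}) (hg : ∀ a ∈ x, g a < α) : ∃ β < α, ∀ a ∈ x, g a ≤ β := by
  let G : ZFSet.{u} → ZFSet.{u} := fun a => vonNeumann (max (g a) x.rank)
  have hGr : ∀ a, (G a).rank = max (g a) x.rank := fun a => rank_vonNeumann _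
  have hGx : ∀ a, G a ∉ x := fun a ha => by
    have := rank_lt_of_mem ha
    rw [hGr] at this
    exact absurd this (not_lt.2 (le_max_right _ _))
  let F : ZFSet.{u} := ZFSet.sep (fun c => ∃ a ∈ x, c = {a, G a}) (vonNeumann α)
  have hF : F.rank < o := by
    refine lt_of_le_of_lt ?_ hα
    rw [← subset_vonNeumann]
    intro x hx
    exact (ZFSet.mem_sep.1 hx).1
  have hGα : ∀ a ∈ x, (G a).rank < α := fun a ha => by rw [hGr]; exact max_lt (hg a ha) hx
  have hpα : ∀ a ∈ x, ({a, G a} : ZFSet).rank < α := fun a ha => by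
    rw [rank_pair]
    exact max_lt (hlim _ ((rank_lt_of_mem ha).trans hx)) (hlim _ (hGα a ha))
  obtain ⟨y, hy, hyb⟩ := hrep ⟨x, hx.trans hα⟩ (by rw [hv]; exact mem_vonNeumann.2 hx) ⟨F, hF⟩ (by
    intro a ha
    refine ⟨⟨G a, (hGα a ha).trans hα⟩, ?_, hGx _, ⟨{a.1, G a}, (hpα a ha).trans hα⟩, ?_, ?_, ?_⟩
    · rw [hv]; exact mem_vonNeumann.2 (hGα a ha)
    · exact (ZFSet.mem_sep (x := vonNeumann α) (p := fun c => ∃ a ∈ x, c = {a, G a})).2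
        ⟨mem_vonNeumann.2 (hpα a ha), a, ha, rfl⟩
    · simp
    · simp)
  rw [hv, mem_vonNeumann] at hy
  refine ⟨y.1.rank, hy, fun a ha => ?_⟩
  obtain ⟨b, hby, hbx, c, hc, hac, hbc⟩ :=
    hyb ⟨a, (rank_lt_of_mem ha).trans (hx.trans hα)⟩ ha
  obtain ⟨-, ap, hap, hcp⟩ := (ZFSet.mem_sep (x := vonNeumann α)
    (p := fun c => ∃ a ∈ x, c = {a, G a})).1 hc
  rw [hcp] at hac hbc
  simp only [ZFSet.mem_pair] at hac hbc
  have hbG : b.1 = G ap := hbc.resolve_left fun h => hbx (h ▸ hap)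
  have haa : a = ap := hac.resolve_right fun h => hGx ap (h ▸ ha)
  have := rank_lt_of_mem hby
  rw [hbG, hGr, ← haa] at this
  exact (le_max_left _ _).trans this.le

theorem card_lt_cof {α : Ordinal.{u}} (hα : 0 < α) (hlim : ∀ a < α, Order.succ a < α) (x : ZFSet.{u})
    (hb : ∀ g : ZFSet.{u} → Ordinal.{u}, (∀ a ∈ x, g a < α) → ∃ β < α, ∀ a ∈ x, g a ≤ β) :
    x.card < α.cof := by
  by_contra! hle
  obtain ⟨s, hs, hsc⟩ := Order.exists_cof_eq α.ToType
  rw [Ordinal.cof_toType] at hsc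
  rw [← hsc, ZFSet.card] at hle
  obtain ⟨f⟩ := hle
  classical
  -- invert
  let g : ZFSet.{u} → Ordinal.{u} := fun a =>
    if h : ∃ i : s, ((equivShrink x).symm (f i)).1 = a then
      Ordinal.typein (α := α.ToType) (· < ·) (Classical.choose h).1 else 0
  have hgf : ∀ i : s, g ((equivShrink x).symm (f i)).1 =
      Ordinal.typein (α := α.ToType) (· < ·) i.1 := by
    intro i
    have h : ∃ j : s, ((equivShrink x).symm (f j)).1 = ((equivShrink x).symm (f i)).1 := ⟨i, rfl⟩
    have h2 := Classical.choose_spec h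
    have h3 : Classical.choose h = i := f.injective ((equivShrink x).symm.injective (Subtype.ext h2))
    simp only [g]
    rw [dif_pos h, h3]
  obtain ⟨β, hβ, hgβ⟩ := hb g (by
    intro a ha
    by_cases h : ∃ i : s, ((equivShrink x).symm (f i)).1 = a
    · simp only [g, dif_pos h]
      exact Ordinal.typein_lt_self _
    · simp only [g, dif_neg h]; exact hα)
  have hβp := hlim _ hβ
  obtain ⟨t, ht⟩ : ∃ t : α.ToType, Ordinal.typein (α := α.ToType) (· < ·) t = Order.succ β :=
    Ordinal.typein_surj _ (by simpa using hβp)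
  obtain ⟨i, his, hti⟩ := hs t
  have h1 := hgβ _ ((equivShrink x).symm (f ⟨i, his⟩)).2
  rw [hgf] at h1
  have h2 : Ordinal.typein (α := α.ToType) (· < ·) t ≤ Ordinal.typein (α := α.ToType) (· < ·) i :=
    (Ordinal.typein_le_typein _).2 (not_lt.2 hti)
  rw [ht] at h2
  exact absurd (h2.trans h1) (not_le.2 (Order.lt_succ β))

theorem inacc_of_rep {α : Ordinal.{u}} (hα0 : Ordinal.omega0 < α)
    (hlim : ∀ a < α, Order.succ a < α)
    (hb : ∀ x : ZFSet.{u}, x.rank < α → ∀ g : ZFSet.{u} → Ordinal.{u},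
      (∀ a ∈ x, g a < α) → ∃ β < α, ∀ a ∈ x, g a ≤ β) :
    α.cof.ord = α ∧ α.cof.IsInaccessible := by
  have hK : ∀ x : ZFSet.{u}, x.rank < α → x.card < α.cof := fun x hx =>
    card_lt_cof (Ordinal.omega0_pos.trans hα0) hlim x (hb x hx)
  have h1 : α.cof.ord = α := by
    refine (Ordinal.ord_cof_le α).antisymm ?_
    by_contra! hlt
    have := hK (vonNeumann α.cof.ord) (by simpa using hlt)
    have h2 := Ordinal.card_le_card_vonNeumann α.cof.ord
    rw [Cardinal.card_ord] at h2
    exact absurd (h2.trans_lt this) (lt_irrefl _)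
  refine ⟨h1, ?_, ?_, ?_⟩
  · rw [← Cardinal.ord_lt_ord, h1]; simpa using hα0
  · rw [h1]
  · intro ν hν
    have hνp : ν.ord < α := by rw [← h1]; exact Cardinal.ord_lt_ord.2 hν
    have h3 := hK (powerset (vonNeumann ν.ord)) (by
      rw [rank_powerset, rank_vonNeumann]; exact hlim _ hνp)
    rw [card_powerset] at h3
    refine lt_of_le_of_lt ?_ h3
    have h2 := Ordinal.card_le_card_vonNeumann ν.ord
    rw [Cardinal.card_ord] at h2
    exact Cardinal.power_le_power_left two_ne_zero h2

/-- Collection holds for the true `V_κ`, seen from any class containing it. -/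
theorem rep_V {κ : Cardinal.{u}} (hκ : κ.IsInaccessible) {A : Set ZFSet.{u}}
    (hA : ∀ x ∈ A, ∀ y ∈ x, y ∈ A) (hsub : Vclass κ.ord ⊆ A)
    (v : A) (hv : v.1 = vonNeumann κ.ord) : RepP A v := by
  rintro ⟨x, hxA⟩ hx F hF
  rw [hv, mem_vonNeumann] at hx
  simp only at hx hF ⊢
  have hcard : x.card < κ.ord.cof := by
    rw [hκ.isRegular.cof_ord]
    calc x.card ≤ (vonNeumann x.rank).card := card_mono (subset_vonNeumann_self x)
      _ = Cardinal.preBeth x.rank := card_vonNeumann _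
      _ < Cardinal.preBeth κ.ord := Cardinal.preBeth_strictMono hx
      _ = κ := hκ.preBeth_ord
  choose! B hB using hF
  let f : Shrink.{u} x → Ordinal.{u} := fun i =>
    (B ⟨((equivShrink x).symm i).1, hA _ hxA _ ((equivShrink x).symm i).2⟩).1.rank
  have hf : ∀ i, f i < κ.ord := fun i => by
    have := (hB ⟨((equivShrink x).symm i).1, hA _ hxA _ ((equivShrink x).symm i).2⟩
      ((equivShrink x).symm i).2).1
    rwa [hv, mem_vonNeumann] at this
  have hsup := Ordinal.iSup_lt_of_lt_cof hcard hf
  have hlim := (Cardinal.isSuccLimit_ord hκ.aleph0_lt.le).succ_lt hsup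
  refine ⟨⟨vonNeumann (Order.succ (⨆ i, f i)), hsub (by simpa [Vclass] using hlim)⟩, ?_, ?_⟩
  · simp only; rw [hv]; exact vonNeumann_mem_of_lt hlim
  · intro a ha
    obtain ⟨-, h2, h3⟩ := hB a ha
    refine ⟨B a, ?_, h2, h3⟩
    rw [mem_vonNeumann, Order.lt_succ_iff]
    have := Ordinal.le_iSup f (equivShrink x ⟨a.1, ha⟩)
    simpa [f] using this

/-- If `κ` is inaccessible and the inaccessibles below `κ` are bounded below
`κ` (`κ` is a "successor inaccessible"), then `(V_κ,∈)` has no proper elementary end extension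
`(N,∈)` with `N` transitive. -/
theorem successor_inaccessible_no_eee
    (κ : Cardinal) (hκ : κ.IsInaccessible)
    (hbdd : ∃ μ : Cardinal, μ < κ ∧
      ∀ lam : Cardinal, lam < κ → lam.IsInaccessible → lam ≤ μ) :
    ¬ ∃ N : ZFSet, N.IsTransitive ∧ IsProperEEESets (Vclass κ.ord) N.toSet := by
  rintro ⟨N, hN, hsub, hne, -, hel⟩
  obtain ⟨μ, hμ, hbd⟩ := hbdd
  have hlim : ∀ a < κ.ord, Order.succ a < κ.ord := fun a ha =>
    (Cardinal.isSuccLimit_ord hκ.aleph0_lt.le).succ_lt ha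
  have hA : ∀ x ∈ N.toSet, ∀ y ∈ x, y ∈ N.toSet := fun x hx y hy => hN x hx hy
  -- minimal element outside
  obtain ⟨e, ⟨heN, heV⟩, hmin⟩ : ∃ e, (e ∈ N.toSet ∧ e ∉ Vclass κ.ord) ∧
      ∀ z ∈ e, z ∈ Vclass κ.ord := by
    have hex : ({e | e ∈ N.toSet ∧ e ∉ Vclass κ.ord} : Set ZFSet).Nonempty := by
      by_contra! hemp
      refine hne (hsub.antisymm fun z hz => ?_)
      by_contra hzV
      exact (Set.eq_empty_iff_forall_notMem.1 hemp z) ⟨hz, hzV⟩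
    obtain ⟨e, he, hm⟩ := ZFSet.mem_wf.has_min _ hex
    refine ⟨e, he, fun z hz => ?_⟩
    by_contra hzV
    exact hm z ⟨hA _ he.1 _ hz, hzV⟩ hz
  have her : e.rank = κ.ord :=
    (rank_le_iff.2 fun z hz => hmin z hz).antisymm (not_lt.1 heV)
  have h1 := (realize_phiOne _ _).1 ((hel 0 phiOne Fin.elim0).2
    ((realize_phiOne _ _).2 (sat_one hlim)))
  obtain ⟨h, w, hwh, hh, hew, hnew⟩ := h1 ⟨e, heN⟩
  have hlev := hist_level hA hh w.1 hwh
  have hwr : w.1.rank = κ.ord := by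
    rw [← her]
    refine le_antisymm (not_lt.1 fun hlt => hnew ((hlev e heN).2 hlt)) ?_
    exact rank_mono fun z hz => hew ⟨z, hA _ heN _ hz⟩ hz
  have hwV : w.1 = vonNeumann κ.ord := by
    ext z
    rw [mem_vonNeumann, ← hwr]
    constructor
    · exact rank_lt_of_mem
    · intro hz
      exact (hlev z (hsub (by rwa [hwr] at hz))).2 hz
  -- the parameter
  have hm : (max μ Cardinal.aleph0).ord < κ.ord :=
    Cardinal.ord_lt_ord.2 (max_lt hμ hκ.aleph0_lt)
  have hp : (vonNeumann (max μ Cardinal.aleph0).ord) ∈ Vclass κ.ord := by simpa [Vclass] using hm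
  have h2 : phiTwo.Realize (Set.inclusion hsub ∘
      fun _ => (⟨vonNeumann (max μ Cardinal.aleph0).ord, hp⟩ : Vclass κ.ord)) := by
    refine (realize_phiTwo _ _).2 ⟨h, w, hwh, ?_, hh, ?_, rep_V hκ hA hsub w hwV⟩
    · rw [hwV]; exact vonNeumann_mem_of_lt hm
    · intro x hx
      rw [hwV, mem_vonNeumann] at hx
      have h3 := hlim _ hx
      refine ⟨⟨{x.1}, hsub (by simpa [Vclass] using h3)⟩, ?_, by simp⟩
      rw [hwV, mem_vonNeumann, rank_singleton]
      exact h3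
  obtain ⟨hp, wp, hwhp, hpwp, hhp, hup, hrep⟩ := (realize_phiTwo _ _).1 ((hel 1 phiTwo _).1 h2)
  have hlevp := hist_level (Vclass_trans _) hhp wp.1 hwhp
  have hwκ : wp.1.rank < κ.ord := wp.2
  have hwpV : wp.1 = vonNeumann wp.1.rank := by
    ext z
    rw [mem_vonNeumann]
    exact ⟨rank_lt_of_mem, fun hz => (hlevp z (hz.trans hwκ)).2 hz⟩
  have hpr : (max μ Cardinal.aleph0).ord < wp.1.rank := by
    simpa using rank_lt_of_mem hpwp
  have hlimp : ∀ a < wp.1.rank, Order.succ a < wp.1.rank := by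
    intro a ha
    obtain ⟨y, hy, hay⟩ := hup ⟨vonNeumann a, by simpa [Vclass] using ha.trans hwκ⟩
      ((hlevp _ (by simpa [Vclass] using ha.trans hwκ)).2 (by simpa using ha))
    have h3 := rank_lt_of_mem hay
    have h4 := rank_lt_of_mem hy
    rw [rank_vonNeumann] at h3
    exact (Order.succ_le_of_lt h3).trans_lt h4
  obtain ⟨hord, hin⟩ := inacc_of_rep (α := wp.1.rank)
    (lt_of_le_of_lt (by rw [← Cardinal.ord_aleph0]; exact Cardinal.ord_le_ord.2 (le_max_right _ _)) hpr)
    hlimp (bounded_of_rep hwκ hlimp wp hwpV hrep)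
  have h5 := hbd _ (Cardinal.ord_lt_ord.1 (by rw [hord]; exact hwκ)) hin
  have h6 : max μ Cardinal.aleph0 < wp.1.rank.cof := Cardinal.ord_lt_ord.1 (by rw [hord]; exact hpr)
  exact absurd ((le_max_left _ _).trans_lt h6) (not_lt.2 h5)
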